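/- (Lackner–Panholzer, Theorem 3.3) For every n ≥ 1, the total number M_n of (n,n)-mapping parking functions is M_n = n!·(n−1)!·Σ_{j=0}^{n−1} (n−j)·(2n)^j / j!. -/

import Mathlib

/-- A rooted labelled tree on the vertex set `Fin n`, encoded by its root and its parent
map: the root is its own parent and every vertex reaches the root by iterating the parent
map (this data is equivalent to a tree on `{1,…,n}` with a distinguished root). -/
structure LabelledRootedTree (n : ℕ) where
  root : Fin n
  parent : Fin n → Fin n
  parent_root : parent root = root
  reaches_root : ∀ v : Fin n, ∃ k : ℕ, parent^[k] v = root

/-- The parking procedure driven by a step map `f` on `Fin n` (the parent map of a tree, or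
an `n`-mapping).  `occ` is the list of occupied vertices; the drivers in the list arrive in
order, and the driver starting at `v` parks at `f^[i] v` for the least `i` such that
`f^[i] v` is unoccupied (searching `i < n` suffices, since the forward orbit of `v` has at
most `n` distinct vertices, all appearing among the first `n` iterates, in visit order).
The result is `none` if some driver finds every vertex on its route occupied. -/
def parkAux (n : ℕ) (f : Fin n → Fin n) : List (Fin n) → List (Fin n) → Option (List (Fin n))
  | occ, [] => some occ
  | occ, v :: rest =>
    match (List.range n).find? (fun i => decide (f^[i] v ∉ occ)) with
    | none => none
    | some i => parkAux n f (f^[i] v :: occ) rest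

/-- `s : Fin m → Fin n` is a parking function for the step map `f` on `Fin n`:
all `m` drivers, arriving in order with preferences `s 1, …, s m`, park successfully. -/
def ParkingSucceeds {n m : ℕ} (f : Fin n → Fin n) (s : Fin m → Fin n) : Prop :=
  (parkAux n f [] (List.ofFn s)).isSome

/-- `s` is a tree parking function for the rooted labelled tree `T`: each driver `k` starts
at `s k` and drives towards the root, parking at the first unoccupied vertex. -/
def IsTreeParking {n m : ℕ} (T : LabelledRootedTree n) (s : Fin m → Fin n) : Prop :=
  ParkingSucceeds T.parent s

/-- `M_{n,m}`: the number of pairs `(f, s)` with `f` an `n`-mapping and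
`s ∈ {1,…,n}^m` a mapping parking function for `f`. -/
noncomputable def MCount (n m : ℕ) : ℕ :=
  Nat.card {p : (Fin n → Fin n) × (Fin m → Fin n) // ParkingSucceeds p.1 p.2}

/-- `F_{n,m}`: the number of pairs `(T, s)` with `T` a rooted labelled tree on `{1,…,n}`
and `s ∈ {1,…,n}^m` a tree parking function for `T`. -/
noncomputable def FCount (n m : ℕ) : ℕ :=
  Nat.card {p : LabelledRootedTree n × (Fin m → Fin n) // IsTreeParking p.1 p.2}

/-!
Reveal the mapping only when it matters: choose `f j` at the moment vertex `j` becomes occupied. At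
any time the starting points split into the basins of the free vertices and the stranded points.
A driver parks at `j` with weight the size of the basin of `j`, and the choice of `f j` then either
merges that basin into another one or, if `f j` is stranded or lies in the basin of `j` itself,
strands it. Hence `M_n` is the total weight of the histories of a coalescent with deaths, started
from `n` blocks of mass one.

The operator summing over one event of the coalescent acts as a derivation on convolutions over
subsets. Therefore the histories of a block system, counted up to the order of the events, satisfy
a renewal equation: up to a factor, they are a tree of mergers followed by a history of the
remaining blocks. For unit masses the generating function is `1 / (1 - X φ)` with
`φ = ∑ (2 (n + 1)) ^ n / (n + 1)! X ^ n`, and the Abel identity gives the coefficients of all powers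
of `φ`.
-/

namespace MappingParking

open Finset Function

section PowersetSums

variable {ι M : Type*} [DecidableEq ι] [AddCommMonoid M]

theorem sum_powerset_erase_eq_sum_sdiff (A : Finset ι) (F : ι → Finset ι → M) :
    ∑ i ∈ A, ∑ S ∈ (A.erase i).powerset, F i S = ∑ S ∈ A.powerset, ∑ i ∈ A \ S, F i S := by
  refine sum_comm' fun i S => ?_
  simp only [mem_powerset, mem_sdiff, subset_erase]
  tauto

theorem sum_powerset_erase_eq_sum_erase (A : Finset ι) (F : ι → Finset ι → M) :
    ∑ i ∈ A, ∑ S ∈ (A.erase i).powerset, F i S =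
      ∑ S ∈ A.powerset, ∑ i ∈ S, F i (S.erase i) := by
  rw [sum_sigma', sum_sigma']
  refine sum_bij' (fun x _ => ⟨insert x.1 x.2, x.1⟩) (fun x _ => ⟨x.2, x.1.erase x.2⟩)
    ?_ ?_ ?_ ?_ ?_ <;> rintro ⟨x, y⟩ h <;>
    simp only [mem_sigma, mem_powerset, subset_erase] at h ⊢
  · exact ⟨insert_subset h.1 h.2.1, mem_insert_self _ _⟩
  · exact ⟨h.1 h.2, (erase_subset _ _).trans h.1, notMem_erase _ _⟩
  · rw [erase_insert h.2.2]
  · rw [insert_erase h.2]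
  · rw [erase_insert h.2.2]

end PowersetSums

section Coalescent

variable {ι R : Type*} [DecidableEq ι] [CommSemiring R]

/-- The block masses after block `i` has been merged into block `j`; the label `i` is meant to be
discarded afterwards. -/
def absorb (b : ι → R) (i j : ι) : ι → R := update b j (b j + b i)

/-- The sum of `F` over all results of one merger in the block system `A` with masses `b`, the
merger of block `i` into block `j` having weight `b i * b j`. -/
def mergeStep (F : Finset ι → (ι → R) → R) (A : Finset ι) (b : ι → R) : R :=
  ∑ i ∈ A, ∑ j ∈ A.erase i, b i * b j * F (A.erase i) (absorb b i j)

/-- The sum of `F` over all results of one event in the block system `A` with masses `b` and dead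
mass `c`: either a merger, or the death of a block `i`, which has weight `b i * (c + b i)` and adds
`b i` to the dead mass. -/
def coalescentStep (F : R → Finset ι → (ι → R) → R) (c : R) (A : Finset ι) (b : ι → R) : R :=
  ∑ i ∈ A, b i * (c + b i) * F (c + b i) (A.erase i) b + mergeStep (F c) A b

/-- The total weight of all histories of `m` events. Each event uses up one block, so for `#A = m`
these are the complete histories. -/
def coalescentCount : ℕ → R → Finset ι → (ι → R) → R
  | 0 => fun _ _ _ => 1
  | m + 1 => coalescentStep (coalescentCount m)

/-- The convolution product of functions of weighted block systems, over the ways of splitting the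
system into two parts. -/
def subsetConv (F G : Finset ι → (ι → R) → R) (A : Finset ι) (b : ι → R) : R :=
  ∑ S ∈ A.powerset, F S b * G (A \ S) b

/-- The total weight of the pairs consisting of a tree of mergers uniting `S` into a single block
and a point of that block, up to the `(#S - 1)!` orders in which the mergers may occur. -/
def treeWeight (S : Finset ι) (b : ι → R) : R :=
  if S = ∅ then 0 else (2 * ∑ i ∈ S, b i) ^ (#S - 1) * ∏ i ∈ S, b i

theorem absorb_apply_of_ne {i j k : ι} (b : ι → R) (hk : k ≠ j) : absorb b i j k = b k :=
  update_of_ne hk _ _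

theorem sum_absorb {A : Finset ι} {i j : ι} (b : ι → R) (hi : i ∈ A) (hj : j ∈ A.erase i) :
    ∑ k ∈ A.erase i, absorb b i j k = ∑ k ∈ A, b k := by
  rw [absorb, sum_update_of_mem hj, sdiff_singleton_eq_erase, ← add_sum_erase A b hi,
    ← add_sum_erase (A.erase i) b hj]
  ring

theorem mul_prod_absorb {A : Finset ι} {i j : ι} (b : ι → R) (hi : i ∈ A) (hj : j ∈ A.erase i) :
    b i * b j * ∏ k ∈ A.erase i, absorb b i j k = (b i + b j) * ∏ k ∈ A, b k := by
  rw [absorb, prod_update_of_mem hj, sdiff_singleton_eq_erase, ← mul_prod_erase A b hi,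
    ← mul_prod_erase (A.erase i) b hj]
  ring

theorem sum_sum_erase_add (A : Finset ι) (b : ι → R) :
    ∑ i ∈ A, ∑ j ∈ A.erase i, (b i + b j) + 2 * ∑ i ∈ A, b i = #A * (2 * ∑ i ∈ A, b i) := by
  calc ∑ i ∈ A, ∑ j ∈ A.erase i, (b i + b j) + 2 * ∑ i ∈ A, b i
      = ∑ i ∈ A, ∑ j ∈ A, (b i + b j) := by
        rw [mul_sum, ← sum_add_distrib]
        exact sum_congr rfl fun i hi => by rw [← sum_erase_add A _ hi, two_mul]
    _ = #A * (2 * ∑ i ∈ A, b i) := by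
        simp only [sum_add_distrib, sum_const, nsmul_eq_mul, ← mul_sum]
        ring

theorem mergeStep_treeWeight_add (S : Finset ι) (b : ι → R) :
    mergeStep treeWeight S b + treeWeight S b = #S * treeWeight S b := by
  obtain h | h | h : #S = 0 ∨ #S = 1 ∨ 2 ≤ #S := by omega
  · simp [mergeStep, treeWeight, card_eq_zero.1 h]
  · obtain ⟨a, rfl⟩ := card_eq_one.1 h
    simp [mergeStep]
  obtain ⟨s, hs⟩ := Nat.exists_eq_add_of_le' h
  have merger : ∀ i ∈ S, ∀ j ∈ S.erase i, b i * b j * treeWeight (S.erase i) (absorb b i j) =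
      (b i + b j) * ((2 * ∑ k ∈ S, b k) ^ s * ∏ k ∈ S, b k) := by
    intro i hi j hj
    have hcard : #(S.erase i) - 1 = s := by rw [card_erase_of_mem hi]; omega
    rw [treeWeight, if_neg (ne_empty_of_mem hj), hcard, sum_absorb b hi hj, mul_left_comm,
      mul_prod_absorb b hi hj]
    ring
  have treeWeight_eq : treeWeight S b =
      2 * (∑ k ∈ S, b k) * ((2 * ∑ k ∈ S, b k) ^ s * ∏ k ∈ S, b k) := by
    rw [treeWeight, if_neg (by rintro rfl; simp at hs), hs, Nat.add_sub_cancel_right (m := 1),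
      pow_succ]
    ring
  rw [mergeStep, sum_congr rfl fun i hi => sum_congr rfl (merger i hi), treeWeight_eq]
  simp only [← sum_mul]
  rw [← add_mul, sum_sum_erase_add]
  ring

theorem mergeStep_subsetConv {F G : Finset ι → (ι → R) → R}
    (hF : ∀ S, DependsOn (F S) (S : Set ι)) (hG : ∀ S, DependsOn (G S) (S : Set ι)) (A : Finset ι)
    (b : ι → R) :
    mergeStep (subsetConv F G) A b =
      subsetConv (mergeStep F) G A b + subsetConv F (mergeStep G) A b := by
  have absorb_off {T : Finset ι} (i j : ι) (hj : j ∉ T) : ∀ k ∈ (T : Set ι), absorb b i j k = b k :=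
    fun k hk => absorb_apply_of_ne b (by rintro rfl; exact hj hk)
  -- After `i` is merged into `j`, each part containing `j` may be taken to contain `i` as well.
  have split_merger : ∀ i ∈ A, ∑ j ∈ A.erase i,
      b i * b j * subsetConv F G (A.erase i) (absorb b i j) =
        ∑ S ∈ (A.erase i).powerset,
          (∑ j ∈ S, b i * b j * F S (absorb b i j)) * G (A.erase i \ S) b +
        ∑ S ∈ (A.erase i).powerset, F S b *
          ∑ j ∈ (A \ S).erase i, b i * b j * G ((A \ S).erase i) (absorb b i j) := by
    intro i _
    simp only [subsetConv, mul_sum]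
    rw [sum_comm, ← sum_add_distrib]
    refine sum_congr rfl fun S hS => ?_
    rw [← sum_sdiff (mem_powerset.1 hS), add_comm, erase_sdiff_comm, sum_mul]
    congr 1 <;> refine sum_congr rfl fun j hj => ?_
    · rw [hG _ (absorb_off i j (by grind)), ← mul_assoc]
    · rw [hF _ (absorb_off i j (by grind)), mul_left_comm]
  rw [mergeStep, sum_congr rfl split_merger, sum_add_distrib, sum_powerset_erase_eq_sum_erase,
    sum_powerset_erase_eq_sum_sdiff]
  simp only [subsetConv, mergeStep, mul_sum _ _ (F _ b)]
  congr 1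
  refine sum_congr rfl fun S _ => ?_
  rw [sum_mul]
  refine sum_congr rfl fun i hi => ?_
  rw [show A.erase i \ S.erase i = A \ S by grind]

theorem coalescentStep_subsetConv {F : Finset ι → (ι → R) → R} {G : R → Finset ι → (ι → R) → R}
    (hF : ∀ S, DependsOn (F S) (S : Set ι)) (hG : ∀ c S, DependsOn (G c S) (S : Set ι)) (c : R)
    (A : Finset ι) (b : ι → R) :
    coalescentStep (fun c => subsetConv F (G c)) c A b =
      subsetConv (mergeStep F) (G c) A b + subsetConv F (coalescentStep G c) A b := by
  have death : ∑ i ∈ A, b i * (c + b i) * subsetConv F (G (c + b i)) (A.erase i) b =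
      ∑ S ∈ A.powerset, F S b *
        ∑ i ∈ A \ S, b i * (c + b i) * G (c + b i) ((A \ S).erase i) b := by
    simp only [subsetConv, mul_sum]
    rw [sum_powerset_erase_eq_sum_sdiff]
    refine sum_congr rfl fun S _ => sum_congr rfl fun i _ => ?_
    rw [erase_sdiff_comm, mul_left_comm]
  rw [coalescentStep, death, mergeStep_subsetConv hF (hG c)]
  simp only [subsetConv, coalescentStep, mul_add, sum_add_distrib]
  ring

theorem coalescentStep_congr {F G : R → Finset ι → (ι → R) → R} {A : Finset ι}
    (h : ∀ i ∈ A, ∀ c b, F c (A.erase i) b = G c (A.erase i) b) (c : R) (b : ι → R) :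
    coalescentStep F c A b = coalescentStep G c A b := by
  unfold coalescentStep mergeStep
  congr 1
  · exact sum_congr rfl fun i hi => by rw [h i hi]
  · exact sum_congr rfl fun i hi => sum_congr rfl fun j _ => by rw [h i hi]

theorem coalescentStep_const_mul (r : R) (F : R → Finset ι → (ι → R) → R) (c : R) (A : Finset ι)
    (b : ι → R) :
    coalescentStep (fun c A b => r * F c A b) c A b = r * coalescentStep F c A b := by
  simp only [coalescentStep, mergeStep, mul_add, mul_sum, mul_left_comm r]

theorem coalescentStep_totalMass_mul (F : R → Finset ι → (ι → R) → R) (c : R) (A : Finset ι)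
    (b : ι → R) :
    coalescentStep (fun c A b => (c + ∑ k ∈ A, b k) * F c A b) c A b =
      (c + ∑ k ∈ A, b k) * coalescentStep F c A b := by
  simp only [coalescentStep, mergeStep, mul_add, mul_sum]
  congr 1
  · refine sum_congr rfl fun i hi => ?_
    rw [add_assoc, add_sum_erase A b hi]
    ring
  · refine sum_congr rfl fun i hi => sum_congr rfl fun j hj => ?_
    rw [sum_absorb b hi hj]
    ring

theorem treeWeight_one (S : Finset ι) :
    treeWeight S (1 : ι → R) = if #S = 0 then 0 else (2 * #S : R) ^ (#S - 1) := by
  simp [treeWeight, card_eq_zero]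

theorem dependsOn_treeWeight (S : Finset ι) :
    DependsOn (treeWeight S : (ι → R) → R) (S : Set ι) := by
  intro b b' h
  rw [treeWeight, treeWeight, sum_congr rfl h, prod_congr rfl h]

theorem dependsOn_coalescentCount (m : ℕ) (c : R) (A : Finset ι) :
    DependsOn (coalescentCount m c A) (A : Set ι) := by
  induction m generalizing c A with
  | zero => exact fun _ _ _ => rfl
  | succ m ih =>
    intro b b' h
    have h_erase (i : ι) : ∀ k ∈ (↑(A.erase i) : Set ι), b k = b' k :=
      fun k hk => h k (mem_of_mem_erase hk)
    simp only [coalescentCount, coalescentStep, mergeStep]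
    congr 1 <;> refine sum_congr rfl fun i hi => ?_
    · rw [h i hi, ih _ _ (h_erase i)]
    · refine sum_congr rfl fun j hj => ?_
      rw [h i hi, h_erase i j hj, ih c (A.erase i) fun k hk => ?_]
      simp only [absorb, update_apply, h i hi, h_erase i j hj, h_erase i k hk]

end Coalescent

section Renewal

variable {ι K : Type*} [DecidableEq ι] [Field K]

/-- The total weight of the complete histories of the block system `A`, divided by `#A !`. -/
def averageCount (c : K) (A : Finset ι) (b : ι → K) : K :=
  coalescentCount #A c A b / (#A).factorial

theorem dependsOn_averageCount (c : K) (A : Finset ι) :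
    DependsOn (averageCount c A) (A : Set ι) := fun _ _ h => by
  rw [averageCount, averageCount, dependsOn_coalescentCount _ _ _ h]

theorem averageCount_empty (c : K) (b : ι → K) : averageCount c ∅ b = 1 := by
  simp [averageCount, coalescentCount]

variable [CharZero K]

theorem coalescentStep_averageCount (c : K) (A : Finset ι) (b : ι → K) :
    coalescentStep averageCount c A b = #A * averageCount c A b := by
  obtain rfl | hA := A.eq_empty_or_nonempty
  · simp [coalescentStep, mergeStep]
  obtain ⟨n, hn⟩ := Nat.exists_eq_add_one.2 hA.card_pos
  have count_erase : ∀ i ∈ A, ∀ (c : K) (b : ι → K), averageCount c (A.erase i) b =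
      (n.factorial : K)⁻¹ * coalescentCount n c (A.erase i) b := by
    intro i hi c b
    rw [averageCount, card_erase_of_mem hi, hn, Nat.add_sub_cancel, div_eq_inv_mul]
  calc coalescentStep averageCount c A b
      = coalescentStep (fun c A b => (n.factorial : K)⁻¹ * coalescentCount n c A b) c A b :=
        coalescentStep_congr count_erase c b
    _ = #A * averageCount c A b := by
        rw [coalescentStep_const_mul, averageCount, hn, coalescentCount, Nat.factorial_succ]
        push_cast
        field_simp

theorem coalescentStep_subsetConv_treeWeight_add (c : K) (A : Finset ι) (b : ι → K) :
    coalescentStep (fun c => subsetConv treeWeight (averageCount c)) c A b +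
        subsetConv treeWeight (averageCount c) A b =
      #A * subsetConv treeWeight (averageCount c) A b := by
  rw [coalescentStep_subsetConv dependsOn_treeWeight dependsOn_averageCount]
  simp only [subsetConv, mul_sum, ← sum_add_distrib]
  refine sum_congr rfl fun S hS => ?_
  have hcard : (#(A \ S) : K) + #S = #A := by
    exact_mod_cast card_sdiff_add_card_eq_card (mem_powerset.1 hS)
  rw [coalescentStep_averageCount, eq_sub_of_add_eq (mergeStep_treeWeight_add S b), ← hcard]
  ring

theorem card_mul_averageCount (c : K) (A : Finset ι) (b : ι → K) :
    #A * averageCount c A b =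
      (c + ∑ i ∈ A, b i) * subsetConv treeWeight (averageCount c) A b := by
  induction hn : #A using Nat.twoStepInduction generalizing c A b with
  | zero => simp [card_eq_zero.1 hn, subsetConv, treeWeight]
  | one =>
    obtain ⟨a, rfl⟩ := card_eq_one.1 hn
    have hpowerset : ({a} : Finset ι).powerset = {∅, {a}} := rfl
    simp [subsetConv, hpowerset, treeWeight, averageCount, coalescentCount, coalescentStep,
      mergeStep, mul_comm]
  | more n _ ih =>
    have average_erase : ∀ i ∈ A, ∀ (c : K) (b : ι → K),
        (n + 1 : K) * averageCount c (A.erase i) b = (c + ∑ k ∈ A.erase i, b k) *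
          subsetConv treeWeight (averageCount c) (A.erase i) b := by
      intro i hi c b
      exact_mod_cast ih c (A.erase i) b (by rw [card_erase_of_mem hi, hn]; rfl)
    have hn0 : (n + 1 : K) ≠ 0 := Nat.cast_add_one_ne_zero n
    refine mul_left_cancel₀ hn0 ?_
    calc (n + 1 : K) * ((n + 2 : ℕ) * averageCount c A b)
        = coalescentStep (fun c A b => (n + 1 : K) * averageCount c A b) c A b := by
          rw [coalescentStep_const_mul, coalescentStep_averageCount, hn]
      _ = coalescentStep (fun c A b => (c + ∑ k ∈ A, b k) *
            subsetConv treeWeight (averageCount c) A b) c A b :=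
          coalescentStep_congr average_erase c b
      _ = (c + ∑ i ∈ A, b i) *
            coalescentStep (fun c => subsetConv treeWeight (averageCount c)) c A b :=
          coalescentStep_totalMass_mul _ c A b
      _ = (n + 1) * ((c + ∑ i ∈ A, b i) * subsetConv treeWeight (averageCount c) A b) := by
          rw [eq_sub_of_add_eq (coalescentStep_subsetConv_treeWeight_add c A b), hn]
          push_cast
          ring

end Renewal

section Abel

open Polynomial

variable {K : Type*} [Field K]

/-- The Abel polynomial `X (X + t n) ^ (n - 1)` divided by `n!`. The case `n = 0` is separate
because of the truncated exponent. -/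
noncomputable def abelPoly (t : K) (n : ℕ) : K[X] :=
  if n = 0 then 1 else C (n.factorial : K)⁻¹ * X * (X + C (t * n)) ^ (n - 1)

@[simp]
theorem abelPoly_zero (t : K) : abelPoly t 0 = 1 := if_pos rfl

theorem abelPoly_succ (t : K) (n : ℕ) :
    abelPoly t (n + 1) = C ((n + 1).factorial : K)⁻¹ * X * (X + C (t * (n + 1 : ℕ))) ^ n :=
  if_neg n.succ_ne_zero

theorem eval_zero_abelPoly_succ (t : K) (n : ℕ) : (abelPoly t (n + 1)).eval 0 = 0 := by
  simp [abelPoly_succ]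

/-- The generating function of the values at `x` of the Abel polynomials. -/
noncomputable def abelSeries (t x : K) : PowerSeries K :=
  PowerSeries.mk fun n => (abelPoly t n).eval x

theorem coeff_abelSeries (t x : K) (n : ℕ) :
    PowerSeries.coeff n (abelSeries t x) = (abelPoly t n).eval x :=
  PowerSeries.coeff_mk _ _

theorem add_mul_eval_abelPoly (t x : K) (n : ℕ) :
    (x + n) * (abelPoly t n).eval (x * t) = x * (t * (x + n)) ^ n / n.factorial := by
  obtain _ | n := n
  · simp
  rw [abelPoly_succ]
  simp only [eval_mul, eval_C, eval_X, eval_pow, eval_add]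
  rw [pow_succ, div_eq_mul_inv]
  ring

theorem mul_sum_antidiagonal_abelPoly (t : K) (n : ℕ) :
    n * ∑ p ∈ antidiagonal n, (abelPoly t p.1).eval (p.2 * t) =
      ∑ j ∈ range n, ((n : K) - j) * (t * n) ^ j / j.factorial := by
  have term : ∀ p ∈ antidiagonal n, n * (abelPoly t p.1).eval (p.2 * t) =
      ((n : K) - p.1) * (t * n) ^ p.1 / p.1.factorial := by
    rintro ⟨j, k⟩ hp
    obtain rfl := mem_antidiagonal.1 hp
    simpa [add_comm (k : K)] using add_mul_eval_abelPoly t (k : K) j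
  rw [mul_sum, sum_congr rfl term, Nat.sum_antidiagonal_eq_sum_range_succ_mk, sum_range_succ]
  simp

variable [CharZero K]

theorem eq_of_derivative_eq_of_eval_zero_eq {p q : K[X]} (hd : derivative p = derivative q)
    (h0 : p.eval 0 = q.eval 0) : p = q := by
  have hpq : p - q = C ((p - q).coeff 0) :=
    eq_C_of_derivative_eq_zero (by rw [derivative_sub, hd, sub_self])
  rw [← sub_eq_zero, hpq, coeff_zero_eq_eval_zero, eval_sub, h0, sub_self, C_0]

theorem derivative_abelPoly_succ (t : K) (n : ℕ) :
    derivative (abelPoly t (n + 1)) = (abelPoly t n).comp (X + C t) := by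
  obtain _ | n := n
  · simp [abelPoly_succ]
  have hfact : (C ((n + 2).factorial : K)⁻¹ : K[X]) * ((n + 2 : ℕ) : K[X]) =
      C ((n + 1).factorial : K)⁻¹ := by
    rw [← C_eq_natCast, ← C_mul, Nat.factorial_succ, Nat.cast_mul, mul_inv, mul_right_comm,
      inv_mul_cancel₀ (Nat.cast_ne_zero.2 (n + 1).succ_ne_zero), one_mul]
  simp only [abelPoly_succ, derivative_mul, derivative_C, derivative_X, derivative_X_add_C_pow,
    mul_comp, pow_comp, add_comp, X_comp, C_comp, ← hfact]
  push_cast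
  simp only [zero_mul, mul_one, zero_add, map_mul, map_add, map_natCast, map_one, add_comp,
    natCast_comp, ofNat_comp, Nat.cast_ofNat]
  ring

theorem sum_antidiagonal_abelPoly (t y : K) (n : ℕ) :
    ∑ p ∈ antidiagonal n, C ((abelPoly t p.2).eval y) * abelPoly t p.1 =
      (abelPoly t n).comp (X + C y) := by
  induction n with
  | zero => simp
  | succ n ih =>
    apply eq_of_derivative_eq_of_eval_zero_eq
    · calc derivative (∑ p ∈ antidiagonal (n + 1), C ((abelPoly t p.2).eval y) * abelPoly t p.1)
          = (∑ p ∈ antidiagonal n,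
              C ((abelPoly t p.2).eval y) * abelPoly t p.1).comp (X + C t) := by
            simp [Nat.sum_antidiagonal_succ, derivative_abelPoly_succ, Polynomial.sum_comp]
        _ = derivative ((abelPoly t (n + 1)).comp (X + C y)) := by
            rw [ih, derivative_comp, derivative_abelPoly_succ, Polynomial.comp_assoc,
              Polynomial.comp_assoc]
            simp [add_right_comm]
    · simp [Nat.sum_antidiagonal_succ, eval_finsetSum, eval_zero_abelPoly_succ]

theorem abelSeries_mul (t x y : K) : abelSeries t x * abelSeries t y = abelSeries t (x + y) := by
  ext n
  have h := congrArg (Polynomial.eval x) (sum_antidiagonal_abelPoly t y n)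
  simp only [eval_finsetSum, eval_mul, eval_C, eval_comp, eval_add, eval_X] at h
  simp only [PowerSeries.coeff_mul, coeff_abelSeries, ← h, mul_comm]

theorem abelSeries_pow (t x : K) (k : ℕ) : abelSeries t x ^ k = abelSeries t (k * x) := by
  induction k with
  | zero =>
    ext n
    obtain _ | n := n <;> simp [coeff_abelSeries, eval_zero_abelPoly_succ, PowerSeries.coeff_one]
  | succ k ih => rw [pow_succ, ih, abelSeries_mul, Nat.cast_succ, add_one_mul]

end Abel

section GeometricSeries

open PowerSeries

variable {K : Type*} [Field K]

theorem inv_one_sub_X_mul_eq (φ : K⟦X⟧) :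
    (1 - X * φ)⁻¹ = 1 + X * φ * (1 - X * φ)⁻¹ := by
  have hinv : (1 - X * φ) * (1 - X * φ)⁻¹ = 1 := PowerSeries.mul_inv_cancel _ (by simp)
  linear_combination hinv

theorem coeff_succ_inv_one_sub_X_mul (φ : K⟦X⟧) (n : ℕ) :
    coeff (n + 1) (1 - X * φ)⁻¹ =
      ∑ p ∈ antidiagonal n, coeff p.1 φ * coeff p.2 (1 - X * φ)⁻¹ := by
  conv_lhs => rw [inv_one_sub_X_mul_eq]
  rw [map_add, mul_assoc, coeff_succ_X_mul, coeff_mul, coeff_one, if_neg n.succ_ne_zero, zero_add]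

theorem coeff_inv_one_sub_X_mul (φ : K⟦X⟧) (n : ℕ) :
    coeff n (1 - X * φ)⁻¹ = ∑ p ∈ antidiagonal n, coeff p.1 (φ ^ p.2) := by
  have geom : (1 - X * φ)⁻¹ =
      ∑ k ∈ range (n + 1), (X * φ) ^ k + (X * φ) ^ (n + 1) * (1 - X * φ)⁻¹ := by
    linear_combination (∑ k ∈ range (n + 1), (X * φ) ^ k) * inv_one_sub_X_mul_eq φ -
      (1 - X * φ)⁻¹ * geom_sum_mul_neg (X * φ) (n + 1)
  rw [geom, map_add, map_sum, mul_pow, mul_assoc, coeff_X_pow_mul', if_neg (by omega), add_zero,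
    ← Nat.sum_antidiagonal_swap, Nat.sum_antidiagonal_eq_sum_range_succ_mk]
  refine sum_congr rfl fun k hk => ?_
  rw [mul_pow, coeff_X_pow_mul', if_pos (mem_range_succ_iff.1 hk)]
  rfl

end GeometricSeries

section UnitMasses

variable {ι K : Type*} [DecidableEq ι] [Field K] [CharZero K]

theorem averageCount_zero_one_eq_subsetConv (A : Finset ι) (hA : A.Nonempty) :
    averageCount 0 A (1 : ι → K) = subsetConv treeWeight (averageCount 0) A 1 := by
  have hcard : (#A : K) ≠ 0 := Nat.cast_ne_zero.2 hA.card_ne_zero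
  refine mul_left_cancel₀ hcard ?_
  simpa using card_mul_averageCount 0 A (1 : ι → K)

theorem coeff_abelSeries_two (n : ℕ) :
    PowerSeries.coeff n (abelSeries 2 2 : PowerSeries K) =
      (2 * (n + 1 : ℕ) : K) ^ n / (n + 1).factorial := by
  have hn : (n + 1 : K) ≠ 0 := Nat.cast_add_one_ne_zero n
  have h := add_mul_eval_abelPoly (2 : K) 1 n
  rw [one_mul, one_mul, add_comm] at h
  rw [coeff_abelSeries, eq_div_of_mul_eq hn ((mul_comm _ _).trans h),
    Nat.factorial_succ, Nat.cast_mul, Nat.cast_succ, div_div, mul_comm (n.factorial : K)]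

theorem averageCount_zero_one (A : Finset ι) :
    averageCount 0 A (1 : ι → K) =
      (#A).factorial * PowerSeries.coeff #A (1 - PowerSeries.X * abelSeries (2 : K) 2)⁻¹ := by
  induction hn : #A using Nat.strong_induction_on generalizing A with
  | _ n ih =>
  obtain rfl | hA := A.eq_empty_or_nonempty
  · simp [averageCount_empty, ← hn]
  obtain ⟨m, rfl⟩ := Nat.exists_eq_add_one.2 (hn ▸ hA.card_pos)
  let term (s : ℕ) : K := (if s = 0 then 0 else (2 * s : K) ^ (s - 1)) *
    ((m + 1 - s).factorial *
      PowerSeries.coeff (m + 1 - s) (1 - PowerSeries.X * abelSeries (2 : K) 2)⁻¹)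
  have term_card : ∀ S ∈ A.powerset,
      treeWeight S (1 : ι → K) * averageCount 0 (A \ S) 1 = term #S := by
    intro S hS
    obtain rfl | hS0 := S.eq_empty_or_nonempty
    · simp [treeWeight, term]
    have hcard : #(A \ S) = m + 1 - #S := by rw [card_sdiff_of_subset (mem_powerset.1 hS), hn]
    rw [treeWeight_one, ih _ (by have := hS0.card_pos; omega) _ hcard]
  rw [averageCount_zero_one_eq_subsetConv A hA, subsetConv, sum_congr rfl term_card,
    sum_powerset_apply_card, hn, sum_range_succ', coeff_succ_inv_one_sub_X_mul,
    Nat.sum_antidiagonal_eq_sum_range_succ_mk, mul_sum]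
  simp only [term, if_true, zero_mul, smul_zero, add_zero]
  refine sum_congr rfl fun a ha => ?_
  have ha : a + 1 ≤ m + 1 := Nat.succ_le_of_lt (mem_range.1 ha)
  rw [coeff_abelSeries_two, nsmul_eq_mul, Nat.cast_choose K ha, if_neg a.succ_ne_zero,
    Nat.add_sub_cancel, Nat.add_sub_add_right]
  have hfact : ((m - a).factorial : K) ≠ 0 := Nat.cast_ne_zero.2 (Nat.factorial_ne_zero _)
  field_simp

end UnitMasses

section ParksAt

variable {α : Type*} {f g : α → α} {occ : List α} {v j k l : α}

/-- A driver who moves along `f` and finds the vertices in `occ` taken parks at `k` when starting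
at `v`. -/
inductive ParksAt (f : α → α) (occ : List α) : α → α → Prop
  | here {v : α} (hv : v ∉ occ) : ParksAt f occ v v
  | move {v k : α} (hv : v ∈ occ) (h : ParksAt f occ (f v) k) : ParksAt f occ v k

namespace ParksAt

theorem notMem (h : ParksAt f occ v k) : k ∉ occ := by
  induction h with
  | here hv => exact hv
  | move _ _ ih => exact ih

theorem unique (hk : ParksAt f occ v k) (hl : ParksAt f occ v l) : k = l := by
  induction hk with
  | here hv => cases hl with
    | here => rfl
    | move hv' => exact absurd hv' hv
  | move hv _ ih => cases hl with
    | here hv' => exact absurd hv hv'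
    | move _ h => exact ih h

theorem congr (h : ParksAt f occ v k) (hfg : ∀ x ∈ occ, f x = g x) : ParksAt g occ v k := by
  induction h with
  | here hv => exact here hv
  | move hv _ ih => exact move hv (hfg _ hv ▸ ih)

theorem exists_iterate (h : ParksAt f occ v k) :
    ∃ i, f^[i] v = k ∧ ∀ t < i, f^[t] v ∈ occ := by
  induction h with
  | here => exact ⟨0, rfl, fun t ht => absurd ht t.not_lt_zero⟩
  | move hv _ ih =>
    obtain ⟨i, hi, hocc⟩ := ih
    refine ⟨i + 1, hi, fun t ht => ?_⟩
    obtain _ | t := t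
    · exact hv
    · exact hocc t (Nat.lt_of_succ_lt_succ ht)

theorem cons (h : ParksAt f occ v k) (hkj : k ≠ j) : ParksAt f (j :: occ) v k := by
  induction h with
  | here hv => exact here (by simp [hkj, hv])
  | move hv _ ih => exact move (List.mem_cons_of_mem _ hv) (ih hkj)

theorem trans_cons (hv : ParksAt f occ v j) (hj : ParksAt f (j :: occ) (f j) k) :
    ParksAt f (j :: occ) v k := by
  induction hv with
  | here => exact move List.mem_cons_self hj
  | move hv _ ih => exact move (List.mem_cons_of_mem _ hv) (ih hj)

end ParksAt

theorem parksAt_iterate {i : ℕ} (hi : f^[i] v ∉ occ) (hocc : ∀ t < i, f^[t] v ∈ occ) :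
    ParksAt f occ v (f^[i] v) := by
  induction i generalizing v with
  | zero => exact .here hi
  | succ i ih =>
    exact .move (hocc 0 i.succ_pos) (ih hi fun t ht => hocc (t + 1) (Nat.succ_lt_succ ht))

theorem parksAt_congr (hfg : ∀ x ∈ occ, f x = g x) : ParksAt f occ v k ↔ ParksAt g occ v k :=
  ⟨fun h => h.congr hfg, fun h => h.congr fun x hx => (hfg x hx).symm⟩

theorem parksAt_nil : ParksAt f [] v k ↔ v = k := by
  constructor
  · rintro (_ | ⟨hv, _⟩)
    · rfl
    · exact absurd hv List.not_mem_nil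
  · rintro rfl
    exact .here List.not_mem_nil

theorem parksAt_cons (hj : j ∉ occ) :
    ParksAt f (j :: occ) v k ↔
      k ≠ j ∧ (ParksAt f occ v k ∨ ParksAt f occ v j ∧ ParksAt f occ (f j) k) := by
  constructor
  · intro h
    refine ⟨fun hkj => h.notMem (hkj ▸ List.mem_cons_self), ?_⟩
    induction h with
    | here hv => exact .inl (.here fun h => hv (List.mem_cons_of_mem _ h))
    | move hv _ ih =>
      obtain rfl | hv := List.mem_cons.1 hv
      · exact .inr ⟨.here hj, ih.elim id And.right⟩
      · exact ih.imp (.move hv) (And.imp_left (.move hv))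
  · rintro ⟨hkj, h | ⟨hvj, hjk⟩⟩
    · exact h.cons hkj
    · exact hvj.trans_cons (hjk.cons hkj)

theorem parksAt_update_cons [DecidableEq α] {y : α} (hj : j ∉ occ) :
    ParksAt (update g j y) (j :: occ) v k ↔
      k ≠ j ∧ (ParksAt g occ v k ∨ ParksAt g occ v j ∧ ParksAt g occ y k) := by
  have hupdate : ∀ x ∈ occ, update g j y x = g x :=
    fun x hx => update_of_ne (by rintro rfl; exact hj hx) _ _
  simp only [parksAt_cons hj, parksAt_congr hupdate, update_self]

theorem injOn_iterate {i : ℕ} (hi : f^[i] v ∉ occ) (hocc : ∀ t < i, f^[t] v ∈ occ) :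
    Set.InjOn (fun t => f^[t] v) (Set.Iic i) := by
  -- If the first `i` steps ran into a cycle, then the `i`-th vertex would be an earlier one.
  have iterate_ne {a c : ℕ} (hac : a < c) (hc : c ≤ i) : f^[a] v ≠ f^[c] v := by
    intro heq
    refine hi ?_
    have : f^[i] v = f^[i - c + a] v := by
      rw [iterate_add_apply, heq, ← iterate_add_apply, Nat.sub_add_cancel hc]
    rw [this]
    exact hocc _ (by omega)
  intro a ha c hc hac
  by_contra hne
  obtain hlt | hlt := lt_or_gt_of_ne hne
  · exact iterate_ne hlt hc hac
  · exact iterate_ne hlt ha hac.symm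

theorem lt_card_of_iterate [Fintype α] {i : ℕ} (hi : f^[i] v ∉ occ)
    (hocc : ∀ t < i, f^[t] v ∈ occ) : i < Fintype.card α := by
  have h := card_le_card_of_injOn (s := Iic i) (t := univ) (fun t => f^[t] v)
    (fun _ _ => mem_univ _) (by simpa using injOn_iterate hi hocc)
  rwa [Nat.card_Iic] at h

end ParksAt

section ParkAux

variable {n : ℕ} {f : Fin n → Fin n} {occ : List (Fin n)} {v k : Fin n}

theorem parkAux_cons_of_parksAt (h : ParksAt f occ v k) (l : List (Fin n)) :
    parkAux n f occ (v :: l) = parkAux n f (k :: occ) l := by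
  obtain ⟨i, rfl, hocc⟩ := h.exists_iterate
  have hlt : i < n := by simpa using lt_card_of_iterate h.notMem hocc
  have hfind : (List.range n).find? (fun i => decide (f^[i] v ∉ occ)) = some i := by
    simpa [hlt, h.notMem] using hocc
  rw [parkAux, hfind]

theorem parkAux_cons_of_forall_not_parksAt (h : ∀ k, ¬ ParksAt f occ v k) (l : List (Fin n)) :
    parkAux n f occ (v :: l) = none := by
  rw [parkAux]
  cases hfind : (List.range n).find? (fun i => decide (f^[i] v ∉ occ)) with
  | none => rfl
  | some i =>
    obtain ⟨hi, -, hocc⟩ := List.find?_range_eq_some.1 hfind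
    exact absurd (parksAt_iterate (by simpa using hi) (by simpa using hocc)) (h _)

end ParkAux

section Basin

variable {α : Type*} [Fintype α] {f g : α → α} {occ : List α} {i j k y : α}

open Classical in
/-- The starting points from which a driver parks at `k`. -/
noncomputable def basin (f : α → α) (occ : List α) (k : α) : Finset α := {v | ParksAt f occ v k}

open Classical in
/-- The starting points from which a driver is unsuccessful. -/
noncomputable def stranded (f : α → α) (occ : List α) : Finset α := {v | ∀ k, ¬ ParksAt f occ v k}

theorem mem_basin : y ∈ basin f occ k ↔ ParksAt f occ y k := by simp [basin]

theorem mem_stranded : y ∈ stranded f occ ↔ ∀ k, ¬ ParksAt f occ y k := by simp [stranded]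

theorem basin_nil (f : α → α) (k : α) : basin f [] k = {k} := by
  ext v
  rw [mem_basin, parksAt_nil, mem_singleton]

theorem stranded_nil (f : α → α) : stranded f [] = ∅ :=
  eq_empty_of_forall_notMem fun v hv => mem_stranded.1 hv v (parksAt_nil.2 rfl)

theorem basin_congr (hfg : ∀ x ∈ occ, f x = g x) (k : α) : basin f occ k = basin g occ k := by
  ext v
  rw [mem_basin, mem_basin, parksAt_congr hfg]

theorem disjoint_basin (h : i ≠ k) : Disjoint (basin f occ i) (basin f occ k) :=
  disjoint_left.2 fun _ hi hk => h ((mem_basin.1 hi).unique (mem_basin.1 hk))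

theorem disjoint_stranded_basin (f : α → α) (occ : List α) (k : α) :
    Disjoint (stranded f occ) (basin f occ k) :=
  disjoint_left.2 fun _ hy hk => mem_stranded.1 hy k (mem_basin.1 hk)

variable [DecidableEq α]

/-- The vertices that are still available when those in `occ` are taken. -/
def freeVertices (occ : List α) : Finset α := {v | v ∉ occ}

theorem mem_freeVertices : k ∈ freeVertices occ ↔ k ∉ occ := by simp [freeVertices]

theorem freeVertices_nil : freeVertices ([] : List α) = univ := by simp [freeVertices]

theorem freeVertices_cons (j : α) (occ : List α) :
    freeVertices (j :: occ) = (freeVertices occ).erase j := by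
  ext k
  simp [mem_freeVertices]

theorem sum_stranded_add_sum_basin {M : Type*} [AddCommMonoid M] (f : α → α) (occ : List α)
    (F : α → M) :
    ∑ y ∈ stranded f occ, F y + ∑ k ∈ freeVertices occ, ∑ y ∈ basin f occ k, F y = ∑ y, F y := by
  have parked : (freeVertices occ).biUnion (basin f occ) = (stranded f occ)ᶜ := by
    ext y
    simp only [mem_biUnion, mem_compl, mem_stranded, mem_basin, mem_freeVertices, not_forall,
      not_not]
    exact exists_congr fun k => and_iff_right_of_imp ParksAt.notMem
  rw [← sum_biUnion fun i _ k _ => disjoint_basin, parked, sum_add_sum_compl]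

theorem basin_update_cons_of_parksAt (hj : j ∉ occ) (hy : ParksAt g occ y i) (hij : i ≠ j) :
    basin (update g j y) (j :: occ) i = basin g occ i ∪ basin g occ j := by
  ext v
  simp [mem_basin, parksAt_update_cons hj, hy, hij]

theorem basin_update_cons_of_not_parksAt (hj : j ∉ occ) (hy : ¬ ParksAt g occ y k) (hkj : k ≠ j) :
    basin (update g j y) (j :: occ) k = basin g occ k := by
  ext v
  simp [mem_basin, parksAt_update_cons hj, hy, hkj]

theorem stranded_update_cons_of_parksAt (hj : j ∉ occ) (hy : ParksAt g occ y i) (hij : i ≠ j) :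
    stranded (update g j y) (j :: occ) = stranded g occ := by
  ext v
  simp only [mem_stranded, parksAt_update_cons hj]
  refine ⟨fun h k hk => ?_, fun h k hk => hk.2.elim (h k) fun hv => h j hv.1⟩
  obtain rfl | hkj := eq_or_ne k j
  · exact h i ⟨hij, .inr ⟨hk, hy⟩⟩
  · exact h k ⟨hkj, .inl hk⟩

theorem stranded_update_cons_of_forall_not_parksAt (hj : j ∉ occ)
    (hy : ∀ k ≠ j, ¬ ParksAt g occ y k) :
    stranded (update g j y) (j :: occ) = stranded g occ ∪ basin g occ j := by
  ext v
  simp only [mem_union, mem_stranded, mem_basin, parksAt_update_cons hj]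
  constructor
  · intro h
    by_contra! hv
    obtain ⟨⟨k, hk⟩, hvj⟩ := hv
    exact h k ⟨by rintro rfl; exact hvj hk, .inl hk⟩
  · rintro (h | h) k ⟨hkj, hk | ⟨-, hyk⟩⟩
    · exact h k hk
    · exact hy k hkj hyk
    · exact hkj (hk.unique h)
    · exact hy k hkj hyk

theorem coalescentCount_basin_of_parksAt {R : Type*} [CommSemiring R] (m : ℕ) (hj : j ∉ occ)
    (hy : ParksAt g occ y i) (hij : i ≠ j) :
    coalescentCount m (#(stranded (update g j y) (j :: occ)) : R) (freeVertices (j :: occ))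
        (fun k => #(basin (update g j y) (j :: occ) k)) =
      coalescentCount m (#(stranded g occ) : R) ((freeVertices occ).erase j)
        (absorb (fun k => #(basin g occ k)) j i) := by
  rw [stranded_update_cons_of_parksAt hj hy hij, freeVertices_cons]
  refine dependsOn_coalescentCount m _ _ fun k hk => ?_
  obtain rfl | hki := eq_or_ne k i
  · rw [basin_update_cons_of_parksAt hj hy hij, card_union_of_disjoint (disjoint_basin hij), absorb,
      update_self, Nat.cast_add]
  · have hyk : ¬ ParksAt g occ y k := fun h => hki (h.unique hy)
    rw [basin_update_cons_of_not_parksAt hj hyk (ne_of_mem_erase hk), absorb_apply_of_ne _ hki]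

theorem coalescentCount_basin_of_forall_not_parksAt {R : Type*} [CommSemiring R] (m : ℕ)
    (hj : j ∉ occ) (hy : ∀ k ≠ j, ¬ ParksAt g occ y k) :
    coalescentCount m (#(stranded (update g j y) (j :: occ)) : R) (freeVertices (j :: occ))
        (fun k => #(basin (update g j y) (j :: occ) k)) =
      coalescentCount m (#(stranded g occ) + #(basin g occ j) : R) ((freeVertices occ).erase j)
        (fun k => #(basin g occ k)) := by
  rw [stranded_update_cons_of_forall_not_parksAt hj hy, freeVertices_cons,
    card_union_of_disjoint (disjoint_stranded_basin g occ j), Nat.cast_add]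
  refine dependsOn_coalescentCount m _ _ fun k hk => ?_
  have hkj := ne_of_mem_erase hk
  rw [basin_update_cons_of_not_parksAt hj (hy k hkj) hkj]

theorem coalescentStep_basin {R : Type*} [CommSemiring R] (m : ℕ) (g : α → α) (occ : List α) :
    coalescentStep (coalescentCount m) (#(stranded g occ) : R) (freeVertices occ)
        (fun k => #(basin g occ k)) =
      ∑ j ∈ freeVertices occ, #(basin g occ j) * ∑ y,
        coalescentCount m (#(stranded (update g j y) (j :: occ)) : R) (freeVertices (j :: occ))
          (fun k => #(basin (update g j y) (j :: occ) k)) := by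
  rw [coalescentStep, mergeStep, ← sum_add_distrib]
  refine sum_congr rfl fun j hj => ?_
  have hjocc : j ∉ occ := mem_freeVertices.1 hj
  have stay : ∀ y ∈ stranded g occ ∪ basin g occ j, ∀ k ≠ j, ¬ ParksAt g occ y k := by
    intro y hy k hkj hyk
    obtain hy | hy := mem_union.1 hy
    · exact mem_stranded.1 hy k hyk
    · exact hkj (hyk.unique (mem_basin.1 hy))
  have move : ∀ i ∈ (freeVertices occ).erase j, ∀ y ∈ basin g occ i, _ := fun i hi y hy =>
    coalescentCount_basin_of_parksAt (R := R) m hjocc (mem_basin.1 hy) (ne_of_mem_erase hi)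
  rw [← sum_stranded_add_sum_basin g occ, ← add_sum_erase _ _ hj, ← add_assoc,
    ← sum_union (disjoint_stranded_basin g occ j),
    sum_congr rfl fun y hy => coalescentCount_basin_of_forall_not_parksAt m hjocc (stay y hy),
    sum_congr rfl fun i hi => sum_congr rfl (move i hi), sum_const,
    card_union_of_disjoint (disjoint_stranded_basin g occ j)]
  simp only [sum_const, nsmul_eq_mul, Nat.cast_add, mul_add, add_mul, mul_sum, mul_assoc]

end Basin

section Extensions

variable {α : Type*} [Fintype α] [DecidableEq α]

/-- The mappings with the same values as `g` on the vertices in `occ`. -/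
def extensions (g : α → α) (occ : List α) : Finset (α → α) := {f | ∀ x ∈ occ, f x = g x}

theorem mem_extensions {f g : α → α} {occ : List α} :
    f ∈ extensions g occ ↔ ∀ x ∈ occ, f x = g x := by
  simp [extensions]

theorem extensions_nil (g : α → α) : extensions g [] = univ := by
  simp [extensions]

theorem extensions_eq_singleton (g : α → α) {occ : List α} (hocc : freeVertices occ = ∅) :
    extensions g occ = {g} := by
  have mem_occ (x : α) : x ∈ occ := by
    by_contra hx
    exact notMem_empty x (hocc ▸ mem_freeVertices.2 hx)
  ext f
  rw [mem_extensions, mem_singleton, funext_iff]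
  exact forall_congr' fun x => imp_iff_right (mem_occ x)

theorem sum_extensions_update_cons {M : Type*} [AddCommMonoid M] (g : α → α) {occ : List α} {j : α}
    (hj : j ∉ occ) (F : (α → α) → M) :
    ∑ y, ∑ f ∈ extensions (update g j y) (j :: occ), F f = ∑ f ∈ extensions g occ, F f := by
  rw [← sum_fiberwise (extensions g occ) (fun f => f j) F]
  refine sum_congr rfl fun y _ => sum_congr ?_ fun _ _ => rfl
  have hupdate : ∀ x ∈ occ, update g j y x = g x :=
    fun x hx => update_of_ne (by rintro rfl; exact hj hx) _ _
  ext f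
  rw [mem_filter, mem_extensions, mem_extensions, List.forall_mem_cons, update_self, and_comm]
  exact and_congr_left' (forall₂_congr fun x hx => by rw [hupdate x hx])

end Extensions

section ParkingCount

variable {n : ℕ}

/-- The number of ways in which `m` further drivers can choose their starting points so that all of
them park. -/
def parkingCount (f : Fin n → Fin n) (occ : List (Fin n)) (m : ℕ) : ℕ :=
  #{s : Fin m → Fin n | (parkAux n f occ (List.ofFn s)).isSome}

theorem parkingCount_zero (f : Fin n → Fin n) (occ : List (Fin n)) : parkingCount f occ 0 = 1 := by
  simp [parkingCount, parkAux]

theorem parkingCount_succ (f : Fin n → Fin n) (occ : List (Fin n)) (m : ℕ) :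
    parkingCount f occ (m + 1) =
      ∑ j ∈ freeVertices occ, #(basin f occ j) * parkingCount f (j :: occ) m := by
  have first_driver : parkingCount f occ (m + 1) =
      ∑ v, #{s : Fin m → Fin n | (parkAux n f occ (v :: List.ofFn s)).isSome} := by
    simp only [parkingCount, card_filter]
    rw [← Fintype.sum_equiv (Fin.consEquiv fun _ => Fin n) _ _ fun _ => rfl, Fintype.sum_prod_type]
    simp [Fin.consEquiv]
  rw [first_driver, ← sum_stranded_add_sum_basin f occ, sum_eq_zero, zero_add]
  · refine sum_congr rfl fun j _ => ?_
    rw [← smul_eq_mul, ← sum_const]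
    refine sum_congr rfl fun v hv => ?_
    simp only [parkAux_cons_of_parksAt (mem_basin.1 hv), parkingCount]
  · intro v hv
    simp [parkAux_cons_of_forall_not_parksAt (mem_stranded.1 hv)]

theorem sum_extensions_parkingCount_succ (g : Fin n → Fin n) (occ : List (Fin n)) (m : ℕ) :
    ∑ f ∈ extensions g occ, parkingCount f occ (m + 1) =
      ∑ j ∈ freeVertices occ, #(basin g occ j) *
        ∑ y, ∑ f ∈ extensions (update g j y) (j :: occ), parkingCount f (j :: occ) m := by
  simp only [parkingCount_succ]
  rw [sum_comm]
  refine sum_congr rfl fun j hj => ?_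
  rw [sum_extensions_update_cons g (mem_freeVertices.1 hj), mul_sum]
  exact sum_congr rfl fun f hf => by rw [basin_congr (mem_extensions.1 hf)]

theorem sum_extensions_parkingCount (R : Type*) [CommSemiring R] (g : Fin n → Fin n)
    (occ : List (Fin n)) {m : ℕ} (hm : #(freeVertices occ) = m) :
    ((∑ f ∈ extensions g occ, parkingCount f occ m : ℕ) : R) =
      coalescentCount m (#(stranded g occ) : R) (freeVertices occ) fun k => #(basin g occ k) := by
  induction m generalizing g occ with
  | zero =>
    rw [extensions_eq_singleton g (card_eq_zero.1 hm), sum_singleton, parkingCount_zero,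
      Nat.cast_one, coalescentCount]
  | succ m ih =>
    have remaining : ∀ j ∈ freeVertices occ, #(freeVertices (j :: occ)) = m := fun j hj => by
      rw [freeVertices_cons, card_erase_of_mem hj, hm, Nat.add_sub_cancel]
    rw [sum_extensions_parkingCount_succ, coalescentCount, coalescentStep_basin, Nat.cast_sum]
    refine sum_congr rfl fun j hj => ?_
    rw [Nat.cast_mul, Nat.cast_sum, sum_congr rfl fun y _ => ih (update g j y) _ (remaining j hj)]

theorem mCount_eq_sum_parkingCount (n m : ℕ) :
    MCount n m = ∑ f : Fin n → Fin n, parkingCount f [] m := by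
  simp only [MCount, ParkingSucceeds, parkingCount, card_filter, Nat.card_eq_fintype_card,
    Fintype.card_subtype, Fintype.sum_prod_type]

theorem mCount_eq_coalescentCount (R : Type*) [CommSemiring R] (n : ℕ) :
    (MCount n n : R) = coalescentCount n 0 (univ : Finset (Fin n)) 1 := by
  have h := sum_extensions_parkingCount R (id : Fin n → Fin n) [] (m := n)
    (by rw [freeVertices_nil, card_fin])
  simp only [extensions_nil, freeVertices_nil, stranded_nil, basin_nil, card_empty, card_singleton,
    Nat.cast_zero, Nat.cast_one] at h
  rw [mCount_eq_sum_parkingCount, h]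
  rfl

end ParkingCount

theorem mCount_eq_sum_antidiagonal (K : Type*) [Field K] [CharZero K] (n : ℕ) :
    (MCount n n : K) = n.factorial * (n.factorial *
      ∑ p ∈ antidiagonal n, (abelPoly (2 : K) p.1).eval ((p.2 : K) * 2)) := by
  have hfact : (n.factorial : K) ≠ 0 := Nat.cast_ne_zero.2 n.factorial_ne_zero
  calc (MCount n n : K)
      = n.factorial * averageCount 0 (univ : Finset (Fin n)) 1 := by
        rw [averageCount, card_fin, mul_div_cancel₀ _ hfact, mCount_eq_coalescentCount K]
    _ = _ := by
        rw [averageCount_zero_one, card_fin, coeff_inv_one_sub_X_mul]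
        simp only [abelSeries_pow, coeff_abelSeries]

end MappingParking

/-- (Lackner–Panholzer, Theorem 3.3) For every `n ≥ 1`,
`M_n = n! (n-1)! Σ_{j=0}^{n-1} (n-j)(2n)^j / j!`. -/
theorem lackner_panholzer_theorem_3_3 (n : ℕ) (hn : 1 ≤ n) :
    (MCount n n : ℚ) =
      (Nat.factorial n : ℚ) * (Nat.factorial (n - 1) : ℚ) *
        ∑ j ∈ Finset.range n, ((n : ℚ) - (j : ℚ)) * (2 * (n : ℚ)) ^ j / (Nat.factorial j : ℚ) := by
  have hfact : (n.factorial : ℚ) = (n - 1).factorial * n := by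
    exact_mod_cast (Nat.mul_factorial_pred (Nat.one_le_iff_ne_zero.1 hn)).symm.trans (mul_comm _ _)
  rw [MappingParking.mCount_eq_sum_antidiagonal, mul_assoc,
    ← MappingParking.mul_sum_antidiagonal_abelPoly, ← mul_assoc _ (n : ℚ), ← hfact]
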